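/- Let ξ, η, ξ₀, V be real numbers, set ω = ξ² + η² + V, and let ψ(x,y,t) = exp(i(ξx + ηy − ωt)). Then at every point (x,y,t) ∈ ℝ³, i∂ₓ∂ᵧᵧψ − ∂ₓ∂ₜψ + i(3ξ₀² − V)∂ₓψ − (ξ₀³ − 3ξ₀V)ψ − 3ξ₀∂ᵧᵧψ − 3iξ₀∂ₜψ = −(ξ + ξ₀)³·ψ(x,y,t). In particular, the west absorbing boundary condition annihilates exactly those plane waves with x-wave number ξ = −ξ₀, for every transverse wave number η. -/

import Mathlib

/-- The 2D plane wave `ψ(x,y,t) = exp(i(ξx + ηy − ωt))`. -/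
noncomputable def planeWave2D (ξ η ω : ℝ) (x y t : ℝ) : ℂ :=
  Complex.exp (Complex.I * ((ξ * x + η * y - ω * t : ℝ) : ℂ))

theorem hasDerivAt_planeWave2D_x (ξ η ω x y t : ℝ) :
    HasDerivAt (fun x' : ℝ => planeWave2D ξ η ω x' y t)
      (Complex.I * ξ * planeWave2D ξ η ω x y t) x := by
  have h : HasDerivAt (fun x' : ℝ => ξ * x' + η * y - ω * t) ξ x := by
    simpa using (((hasDerivAt_id x).const_mul ξ).add_const (η * y)).sub_const (ω * t)
  refine (h.ofReal_comp.const_mul Complex.I).cexp.congr_deriv ?_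
  simp only [planeWave2D]
  ring

theorem hasDerivAt_planeWave2D_y (ξ η ω x y t : ℝ) :
    HasDerivAt (fun y' : ℝ => planeWave2D ξ η ω x y' t)
      (Complex.I * η * planeWave2D ξ η ω x y t) y := by
  have h : HasDerivAt (fun y' : ℝ => ξ * x + η * y' - ω * t) η y := by
    simpa using (((hasDerivAt_id y).const_mul η).const_add (ξ * x)).sub_const (ω * t)
  refine (h.ofReal_comp.const_mul Complex.I).cexp.congr_deriv ?_
  simp only [planeWave2D]
  ring

theorem hasDerivAt_planeWave2D_t (ξ η ω x y t : ℝ) :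
    HasDerivAt (fun t' : ℝ => planeWave2D ξ η ω x y t')
      (-Complex.I * ω * planeWave2D ξ η ω x y t) t := by
  have h : HasDerivAt (fun t' : ℝ => ξ * x + η * y - ω * t') (-ω) t := by
    simpa using ((hasDerivAt_id t).const_mul ω).const_sub (ξ * x + η * y)
  refine (h.ofReal_comp.const_mul Complex.I).cexp.congr_deriv ?_
  simp only [planeWave2D]
  push_cast
  ring

theorem planeWave2D_ne_zero (ξ η ω x y t : ℝ) : planeWave2D ξ η ω x y t ≠ 0 :=
  Complex.exp_ne_zero _

/-- for the 2D plane wave with `ω = ξ² + η² + V`, the left-hand side of the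
west absorbing boundary condition ABC(1,1) equals `−(ξ + ξ₀)³·ψ`; in particular it
annihilates exactly the plane waves with `ξ = −ξ₀`, for every transverse wave number `η`. -/
theorem west_abc_plane_wave (ξ η ξ₀ V : ℝ) (ω : ℝ) (hω : ω = ξ ^ 2 + η ^ 2 + V) :
    (∀ x y t : ℝ,
      Complex.I *
          deriv (fun x' : ℝ =>
            deriv (fun y' : ℝ => deriv (fun y'' : ℝ => planeWave2D ξ η ω x' y'' t) y') y) x
        - deriv (fun x' : ℝ => deriv (fun t' : ℝ => planeWave2D ξ η ω x' y t') t) x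
        + Complex.I * ((3 * ξ₀ ^ 2 - V : ℝ) : ℂ) *
            deriv (fun x' : ℝ => planeWave2D ξ η ω x' y t) x
        - ((ξ₀ ^ 3 - 3 * ξ₀ * V : ℝ) : ℂ) * planeWave2D ξ η ω x y t
        - 3 * (ξ₀ : ℂ) *
            deriv (fun y' : ℝ => deriv (fun y'' : ℝ => planeWave2D ξ η ω x y'' t) y') y
        - 3 * Complex.I * (ξ₀ : ℂ) * deriv (fun t' : ℝ => planeWave2D ξ η ω x y t') t
      = -(((ξ + ξ₀ : ℝ) : ℂ)) ^ 3 * planeWave2D ξ η ω x y t) ∧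
    ((∀ x y t : ℝ,
      Complex.I *
          deriv (fun x' : ℝ =>
            deriv (fun y' : ℝ => deriv (fun y'' : ℝ => planeWave2D ξ η ω x' y'' t) y') y) x
        - deriv (fun x' : ℝ => deriv (fun t' : ℝ => planeWave2D ξ η ω x' y t') t) x
        + Complex.I * ((3 * ξ₀ ^ 2 - V : ℝ) : ℂ) *
            deriv (fun x' : ℝ => planeWave2D ξ η ω x' y t) x
        - ((ξ₀ ^ 3 - 3 * ξ₀ * V : ℝ) : ℂ) * planeWave2D ξ η ω x y t
        - 3 * (ξ₀ : ℂ) *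
            deriv (fun y' : ℝ => deriv (fun y'' : ℝ => planeWave2D ξ η ω x y'' t) y') y
        - 3 * Complex.I * (ξ₀ : ℂ) * deriv (fun t' : ℝ => planeWave2D ξ η ω x y t') t
      = 0) ↔ ξ = -ξ₀) := by
  refine and_iff_left_of_imp (fun H => ?_) |>.mpr ?_
  · simp_rw [H]
    constructor
    · intro h
      have h0 := (mul_eq_zero.mp (h 0 0 0)).resolve_right (planeWave2D_ne_zero ξ η ω 0 0 0)
      have h1 : ((ξ + ξ₀ : ℝ) : ℂ) = 0 := by simpa using h0
      exact eq_neg_of_add_eq_zero_left (Complex.ofReal_eq_zero.mp h1)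
    · rintro rfl x y t
      simp
  · intro x y t
    simp_rw [(hasDerivAt_planeWave2D_y ξ η ω _ _ _).deriv,
      (hasDerivAt_planeWave2D_t ξ η ω _ _ _).deriv,
      ((hasDerivAt_planeWave2D_y ξ η ω _ _ _).const_mul _).deriv,
      ((hasDerivAt_planeWave2D_x ξ η ω _ _ _).const_mul _).deriv,
      (hasDerivAt_planeWave2D_x ξ η ω _ _ _).deriv, ← mul_assoc,
      ((hasDerivAt_planeWave2D_x ξ η ω _ _ _).const_mul _).deriv, hω]
    push_cast
    ring_nf
    simp only [Complex.I_sq, Complex.I_pow_four]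
    ring
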